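/- If |k| > √(R/√2) and I = i·k·G, where G : [0,1] → ℂ is continuous, then the solution ψ satisfies k⁶·‖ψ‖² ≤ 4·R²·‖G‖², k⁴·‖ψ'‖² ≤ 2·R²·‖G‖², and k²·‖ψ''‖² ≤ 2·R²·‖G‖². -/

import Mathlib

open MeasureTheory Complex

noncomputable section

/-- Square of the L² norm over [0,1]. -/
def l2sq (f : ℝ → ℂ) : ℝ := ∫ y in (0:ℝ)..(1:ℝ), ‖f y‖ ^ 2

/-- L² inner product over [0,1]. -/
def l2ip (f g : ℝ → ℂ) : ℂ := ∫ y in (0:ℝ)..(1:ℝ), (starRingEnd ℂ) (f y) * g y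

/-!
Pair the Orr–Sommerfeld equation with `ψ` and take real parts. Integration by parts turns the
viscous terms into `R⁻¹ (‖ψ''‖² + 2 k² ‖ψ'‖² + k⁴ ‖ψ‖²)` and the `s`-terms into
`s.re (‖ψ'‖² + k² ‖ψ‖²) ≥ 0`; the advection terms contribute imaginary numbers only, except for the
commutator of the velocity profile `U` with `d/dy`, which leaves `k Im ⟨ψ, U' ψ'⟩`.
If `|U'| ≤ 1` and `R² ≤ 2 k⁴`, the inequality of arithmetic and geometric means absorbs this term
and the forcing into the viscous ones. Plane Couette flow is the case `U y = y`.
-/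

section L2

variable {f g h : ℝ → ℂ}

lemma l2sq_nonneg (f : ℝ → ℂ) : 0 ≤ l2sq f :=
  intervalIntegral.integral_nonneg zero_le_one fun _ _ ↦ sq_nonneg _

lemma l2sq_mono (hf : Continuous f) (hg : Continuous g)
    (hfg : ∀ y ∈ Set.Icc (0 : ℝ) 1, ‖f y‖ ≤ ‖g y‖) : l2sq f ≤ l2sq g :=
  intervalIntegral.integral_mono_on zero_le_one
    ((hf.norm.pow 2).intervalIntegrable _ _) ((hg.norm.pow 2).intervalIntegrable _ _)
    fun y hy ↦ pow_le_pow_left₀ (norm_nonneg _) (hfg y hy) 2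

lemma l2ip_self (f : ℝ → ℂ) : l2ip f f = (l2sq f : ℂ) := by
  simp only [l2ip, l2sq, conj_mul', ← ofReal_pow, intervalIntegral.integral_ofReal]

lemma l2ip_congr_right (hgh : Set.EqOn g h (Set.Icc 0 1)) : l2ip f g = l2ip f h := by
  refine intervalIntegral.integral_congr fun y hy ↦ ?_
  rw [Set.uIcc_of_le zero_le_one] at hy
  simp only [hgh hy]

lemma l2ip_add_right (hf : Continuous f) (hg : Continuous g) (hh : Continuous h) :
    l2ip f (fun y ↦ g y + h y) = l2ip f g + l2ip f h := by
  simp only [l2ip, mul_add]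
  exact intervalIntegral.integral_add ((by fun_prop : Continuous _).intervalIntegrable _ _)
    ((by fun_prop : Continuous _).intervalIntegrable _ _)

lemma l2ip_const_mul_right (f g : ℝ → ℂ) (c : ℂ) :
    l2ip f (fun y ↦ c * g y) = c * l2ip f g := by
  simp only [l2ip, mul_left_comm _ c, intervalIntegral.integral_const_mul]

lemma l2ip_ofReal_mul_self_im (u : ℝ → ℝ) (f : ℝ → ℂ) :
    (l2ip f fun y ↦ u y * f y).im = 0 := by
  have hreal (y : ℝ) : (starRingEnd ℂ) (f y) * (u y * f y) = ((u y * ‖f y‖ ^ 2 : ℝ) : ℂ) := by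
    rw [mul_left_comm, conj_mul']
    push_cast
    rfl
  simp only [l2ip, hreal, intervalIntegral.integral_ofReal, ofReal_im]

lemma two_mul_mul_im_l2ip_le (a b : ℝ) (hf : Continuous f) (hg : Continuous g) :
    2 * a * b * (l2ip f g).im ≤ a ^ 2 * l2sq f + b ^ 2 * l2sq g := by
  have hintegrable {u : ℝ → ℝ} (hu : Continuous u) : IntervalIntegrable u volume 0 1 :=
    hu.intervalIntegrable _ _
  have hnorm : |(l2ip f g).im| ≤ ∫ y in (0 : ℝ)..1, ‖f y‖ * ‖g y‖ := by
    refine (abs_im_le_norm _).trans ?_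
    simpa only [l2ip, norm_mul, RCLike.norm_conj] using
      intervalIntegral.norm_integral_le_integral_norm (μ := volume)
        (f := fun y ↦ (starRingEnd ℂ) (f y) * g y) zero_le_one
  calc 2 * a * b * (l2ip f g).im
      ≤ |2 * a * b| * |(l2ip f g).im| := (le_abs_self _).trans_eq (abs_mul _ _)
    _ ≤ |2 * a * b| * ∫ y in (0 : ℝ)..1, ‖f y‖ * ‖g y‖ := by gcongr
    _ = ∫ y in (0 : ℝ)..1, 2 * (|a| * ‖f y‖) * (|b| * ‖g y‖) := by
        rw [← intervalIntegral.integral_const_mul, abs_mul, abs_mul, abs_two]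
        congr! 2
        ring
    _ ≤ ∫ y in (0 : ℝ)..1, (a ^ 2 * ‖f y‖ ^ 2 + b ^ 2 * ‖g y‖ ^ 2) := by
        refine intervalIntegral.integral_mono_on zero_le_one (hintegrable (by fun_prop))
          (hintegrable (by fun_prop)) fun y _ ↦ ?_
        simpa only [mul_pow, sq_abs] using two_mul_le_add_sq (|a| * ‖f y‖) (|b| * ‖g y‖)
    _ = a ^ 2 * l2sq f + b ^ 2 * l2sq g := by
        rw [intervalIntegral.integral_add (hintegrable (by fun_prop)) (hintegrable (by fun_prop)),
          intervalIntegral.integral_const_mul, intervalIntegral.integral_const_mul, l2sq, l2sq]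

lemma l2ip_deriv_right (hf : ContDiff ℝ 1 f) (hg : ContDiff ℝ 1 g)
    (h0 : f 0 = 0 ∨ g 0 = 0) (h1 : f 1 = 0 ∨ g 1 = 0) :
    l2ip f (deriv g) = -l2ip (deriv f) g := by
  have hparts := intervalIntegral.integral_mul_deriv_eq_deriv_mul (a := 0) (b := 1)
    (fun y _ ↦ (hf.differentiable one_ne_zero y).hasDerivAt.star)
    (fun y _ ↦ (hg.differentiable one_ne_zero y).hasDerivAt)
    ((hf.continuous_deriv le_rfl).star.intervalIntegrable _ _)
    ((hg.continuous_deriv le_rfl).intervalIntegrable _ _)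
  have hbdry0 : star (f 0) * g 0 = 0 := by simpa using h0
  have hbdry1 : star (f 1) * g 1 = 0 := by simpa using h1
  simpa only [hbdry0, hbdry1, sub_zero, zero_sub, l2ip, starRingEnd_apply] using hparts

end L2

section SecondDerivative

variable {f : ℝ → ℂ}

lemma l2ip_iteratedDeriv_two (hf : ContDiff ℝ 2 f) (h0 : f 0 = 0) (h1 : f 1 = 0) :
    l2ip f (iteratedDeriv 2 f) = -(l2sq (deriv f) : ℂ) := by
  rw [iteratedDeriv_succ, iteratedDeriv_one,
    l2ip_deriv_right (hf.of_le one_le_two) hf.deriv' (.inl h0) (.inl h1), l2ip_self]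

lemma l2ip_iteratedDeriv_four (hf : ContDiff ℝ 4 f) (h0 : f 0 = 0) (h1 : f 1 = 0)
    (h0' : deriv f 0 = 0 ∨ iteratedDeriv 2 f 0 = 0)
    (h1' : deriv f 1 = 0 ∨ iteratedDeriv 2 f 1 = 0) :
    l2ip f (iteratedDeriv 4 f) = (l2sq (iteratedDeriv 2 f) : ℂ) := by
  have hf' : ContDiff ℝ 1 (deriv f) := (hf.of_le (by norm_num : (2 : WithTop ℕ∞) ≤ 4)).deriv'
  have hf'' : ContDiff ℝ 2 (iteratedDeriv 2 f) := by
    rw [iteratedDeriv_eq_iterate]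
    exact hf.iterate_deriv' 2 2
  calc l2ip f (iteratedDeriv 4 f)
      = l2ip f (deriv (deriv (iteratedDeriv 2 f))) := by rw [iteratedDeriv_succ, iteratedDeriv_succ]
    _ = -l2ip (deriv f) (deriv (iteratedDeriv 2 f)) :=
        l2ip_deriv_right (hf.of_le (by norm_num)) hf''.deriv' (.inl h0) (.inl h1)
    _ = l2ip (deriv (deriv f)) (iteratedDeriv 2 f) := by
        rw [l2ip_deriv_right hf' (hf''.of_le one_le_two) h0' h1', neg_neg]
    _ = (l2sq (iteratedDeriv 2 f) : ℂ) := by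
        rw [← l2ip_self, iteratedDeriv_succ, iteratedDeriv_one]

lemma l2ip_ofReal_mul_iteratedDeriv_two {u : ℝ → ℝ} (hu : ContDiff ℝ 1 u) (hf : ContDiff ℝ 2 f)
    (h0 : f 0 = 0) (h1 : f 1 = 0) :
    (l2ip f fun y ↦ u y * iteratedDeriv 2 f y) =
      -(l2ip (deriv f) fun y ↦ u y * deriv f y)
        - l2ip f fun y ↦ ((deriv u y : ℝ) : ℂ) * deriv f y := by
  have hf' : ContDiff ℝ 1 (deriv f) := hf.deriv'
  have hprod : ContDiff ℝ 1 fun y ↦ (u y : ℂ) * deriv f y :=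
    (ofRealCLM.contDiff.comp hu).mul hf'
  have hderiv : deriv (fun y ↦ (u y : ℂ) * deriv f y) =
      fun y ↦ ((deriv u y : ℝ) : ℂ) * deriv f y + u y * iteratedDeriv 2 f y := by
    ext y
    rw [iteratedDeriv_succ, iteratedDeriv_one]
    exact ((hu.differentiable one_ne_zero y).hasDerivAt.ofReal_comp.mul
      (hf'.differentiable one_ne_zero y).hasDerivAt).deriv
  have hparts := l2ip_deriv_right (hf.of_le one_le_two) hprod (.inl h0) (.inl h1)
  rw [hderiv, l2ip_add_right hf.continuous (by fun_prop) (by fun_prop)] at hparts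
  linear_combination hparts

end SecondDerivative

/-- The Orr–Sommerfeld operator at Reynolds number `R`, streamwise wave number `k` and Laplace
variable `s`, acting on stream functions over the shear flow with velocity profile `U`. It is
`R⁻¹ (D² - k²)² - (s + i k U) (D² - k²) + i k U''` with `D = d/dy`, expanded in powers of `D`. -/
def orrSommerfeld (R k : ℝ) (s : ℂ) (U : ℝ → ℝ) (ψ : ℝ → ℂ) (y : ℝ) : ℂ :=
  (1 / (R : ℂ)) * iteratedDeriv 4 ψ y
    - (s + 2 * (k : ℂ) ^ 2 / (R : ℂ) + I * (k : ℂ) * (U y : ℂ)) * iteratedDeriv 2 ψ y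
    + (s * (k : ℂ) ^ 2 + (k : ℂ) ^ 4 / (R : ℂ) + I * (k : ℂ) ^ 3 * (U y : ℂ)
      + I * (k : ℂ) * ((iteratedDeriv 2 U y : ℝ) : ℂ)) * ψ y

section OrrSommerfeld

variable {R k : ℝ} {s : ℂ} {U : ℝ → ℝ} {ψ G : ℝ → ℂ}

lemma l2ip_orrSommerfeld (hU : ContDiff ℝ 2 U) (hψ : ContDiff ℝ 4 ψ) :
    l2ip ψ (orrSommerfeld R k s U ψ) =
      1 / R * l2ip ψ (iteratedDeriv 4 ψ) - (s + 2 * k ^ 2 / R) * l2ip ψ (iteratedDeriv 2 ψ)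
        + (s * k ^ 2 + k ^ 4 / R) * l2ip ψ ψ
        + I * (l2ip ψ (fun y ↦ ((k ^ 3 * U y + k * iteratedDeriv 2 U y : ℝ) : ℂ) * ψ y)
          - k * l2ip ψ fun y ↦ U y * iteratedDeriv 2 ψ y) := by
  have hψ0 := hψ.continuous
  have hψ2 : Continuous (iteratedDeriv 2 ψ) := hψ.continuous_iteratedDeriv 2 (by norm_num)
  have hU0 := hU.continuous
  have hexpand : orrSommerfeld R k s U ψ = fun y ↦
      1 / (R : ℂ) * iteratedDeriv 4 ψ y + (-(s + 2 * k ^ 2 / R) * iteratedDeriv 2 ψ y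
        + ((s * k ^ 2 + k ^ 4 / R) * ψ y
        + (I * (((k ^ 3 * U y + k * iteratedDeriv 2 U y : ℝ) : ℂ) * ψ y)
          + -(I * k) * (U y * iteratedDeriv 2 ψ y)))) := by
    ext y
    simp only [orrSommerfeld]
    push_cast
    ring
  rw [hexpand]
  repeat rw [l2ip_add_right hψ0 (by fun_prop) (by fun_prop)]
  simp only [l2ip_const_mul_right]
  ring

lemma re_l2ip_orrSommerfeld (hU : ContDiff ℝ 2 U) (hψ : ContDiff ℝ 4 ψ)
    (h0 : ψ 0 = 0) (h1 : ψ 1 = 0)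
    (h0' : deriv ψ 0 = 0 ∨ iteratedDeriv 2 ψ 0 = 0)
    (h1' : deriv ψ 1 = 0 ∨ iteratedDeriv 2 ψ 1 = 0) :
    (l2ip ψ (orrSommerfeld R k s U ψ)).re =
      1 / R * (l2sq (iteratedDeriv 2 ψ) + 2 * k ^ 2 * l2sq (deriv ψ) + k ^ 4 * l2sq ψ)
        + s.re * (l2sq (deriv ψ) + k ^ 2 * l2sq ψ)
        - k * (l2ip ψ fun y ↦ ((deriv U y : ℝ) : ℂ) * deriv ψ y).im := by
  have hψ' : ContDiff ℝ 2 ψ := hψ.of_le (by norm_num)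
  set z := l2ip ψ fun y ↦ ((deriv U y : ℝ) : ℂ) * deriv ψ y
  set v := l2ip ψ fun y ↦ ((k ^ 3 * U y + k * iteratedDeriv 2 U y : ℝ) : ℂ) * ψ y
  set w := l2ip (deriv ψ) fun y ↦ U y * deriv ψ y
  have hv : v.im = 0 := l2ip_ofReal_mul_self_im _ ψ
  have hw : w.im = 0 := l2ip_ofReal_mul_self_im U (deriv ψ)
  have hsplit : l2ip ψ (orrSommerfeld R k s U ψ) =
      ((1 / R * (l2sq (iteratedDeriv 2 ψ) + 2 * k ^ 2 * l2sq (deriv ψ) + k ^ 4 * l2sq ψ) : ℝ) : ℂ)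
        + s * ((l2sq (deriv ψ) + k ^ 2 * l2sq ψ : ℝ) : ℂ) + I * (v + (k : ℂ) * (w + z)) := by
    rw [l2ip_orrSommerfeld hU hψ, l2ip_iteratedDeriv_four hψ h0 h1 h0' h1',
      l2ip_iteratedDeriv_two hψ' h0 h1, l2ip_self,
      l2ip_ofReal_mul_iteratedDeriv_two (hU.of_le one_le_two) hψ' h0 h1]
    simp only [v, w, z]
    push_cast
    ring
  rw [hsplit, add_re, add_re, ofReal_re, re_mul_ofReal, I_mul_re, add_im, im_ofReal_mul, add_im,
    hv, hw]
  ring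

lemma weighted_l2sq_le_of_orrSommerfeld_eq (hR : 0 < R) (hRk : R ^ 2 ≤ 2 * k ^ 4)
    (hs : 0 ≤ s.re) (hU : ContDiff ℝ 2 U) (hU' : ∀ y ∈ Set.Icc (0 : ℝ) 1, |deriv U y| ≤ 1)
    (hψ : ContDiff ℝ 4 ψ) (h0 : ψ 0 = 0) (h1 : ψ 1 = 0)
    (h0' : deriv ψ 0 = 0 ∨ iteratedDeriv 2 ψ 0 = 0)
    (h1' : deriv ψ 1 = 0 ∨ iteratedDeriv 2 ψ 1 = 0) (hG : Continuous G)
    (heq : ∀ y ∈ Set.Icc (0 : ℝ) 1, orrSommerfeld R k s U ψ y = I * k * G y) :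
    k ^ 2 * l2sq (iteratedDeriv 2 ψ) + k ^ 4 * l2sq (deriv ψ) + k ^ 6 / 4 * l2sq ψ ≤
      R ^ 2 * l2sq G := by
  have hψ' : Continuous (deriv ψ) := hψ.continuous_deriv (by norm_num)
  have hUψ' : Continuous fun y ↦ ((deriv U y : ℝ) : ℂ) * deriv ψ y :=
    (continuous_ofReal.comp (hU.continuous_deriv one_le_two)).mul hψ'
  set z := l2ip ψ fun y ↦ ((deriv U y : ℝ) : ℂ) * deriv ψ y
  have henergy : l2sq (iteratedDeriv 2 ψ) + 2 * k ^ 2 * l2sq (deriv ψ) + k ^ 4 * l2sq ψ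
      + R * s.re * (l2sq (deriv ψ) + k ^ 2 * l2sq ψ) = R * k * z.im - R * k * (l2ip ψ G).im := by
    have hre := re_l2ip_orrSommerfeld (R := R) (k := k) (s := s) hU hψ h0 h1 h0' h1'
    rw [l2ip_congr_right heq, l2ip_const_mul_right, mul_assoc, I_mul_re, im_ofReal_mul] at hre
    field_simp at hre
    linear_combination -hre
  have hdamping : 0 ≤ R * s.re * (l2sq (deriv ψ) + k ^ 2 * l2sq ψ) :=
    mul_nonneg (mul_nonneg hR.le hs)
      (add_nonneg (l2sq_nonneg _) (mul_nonneg (sq_nonneg k) (l2sq_nonneg ψ)))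
  have hshear : R * k * z.im ≤ k ^ 4 / 2 * l2sq ψ + k ^ 2 * l2sq (deriv ψ) :=
    calc R * k * z.im = 2 * (R / 2) * k * z.im := by ring
      _ ≤ (R / 2) ^ 2 * l2sq ψ + k ^ 2 * l2sq (fun y ↦ ((deriv U y : ℝ) : ℂ) * deriv ψ y) :=
          two_mul_mul_im_l2ip_le _ _ hψ.continuous hUψ'
      _ ≤ k ^ 4 / 2 * l2sq ψ + k ^ 2 * l2sq (deriv ψ) := by
          gcongr
          · exact l2sq_nonneg ψ
          · linarith
          · refine l2sq_mono hUψ' hψ' fun y hy ↦ ?_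
            simpa using mul_le_mul_of_nonneg_right (hU' y hy) (norm_nonneg (deriv ψ y))
  have hforcing : -(k ^ 3 * R * (l2ip ψ G).im) ≤ k ^ 6 / 4 * l2sq ψ + R ^ 2 * l2sq G := by
    linear_combination two_mul_mul_im_l2ip_le (-(k ^ 3 / 2)) R hψ.continuous hG
  linear_combination k ^ 2 * henergy + k ^ 2 * hshear + k ^ 2 * hdamping + hforcing

end OrrSommerfeld

lemma sq_le_two_mul_pow_four_of_sqrt_div_sqrt_two_le_abs {R k : ℝ} (hR : 0 ≤ R)
    (hk : √(R / √2) ≤ |k|) : R ^ 2 ≤ 2 * k ^ 4 := by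
  have hdiv : R / √2 ≤ k ^ 2 := by simpa only [sq_abs] using (Real.sqrt_le_iff.mp hk).2
  calc R ^ 2 ≤ (k ^ 2 * √2) ^ 2 := pow_le_pow_left₀ hR ((div_le_iff₀ (by positivity)).mp hdiv) 2
    _ = 2 * k ^ 4 := by
      rw [mul_pow, Real.sq_sqrt zero_le_two]
      ring

/-- Each wall is either no-slip (`ψ' = 0`) or stress-free (`ψ'' = 0`). -/
theorem orr_sommerfeld_estimates_forcing_G_general {R k : ℝ} {s : ℂ} {U : ℝ → ℝ} {ψ G : ℝ → ℂ}
    (hR : 0 < R) (hs : 0 ≤ s.re) (hU : ContDiff ℝ 2 U)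
    (hU' : ∀ y ∈ Set.Icc (0 : ℝ) 1, |deriv U y| ≤ 1)
    (hψ : ContDiff ℝ 4 ψ) (h0 : ψ 0 = 0) (h1 : ψ 1 = 0)
    (h0' : deriv ψ 0 = 0 ∨ iteratedDeriv 2 ψ 0 = 0)
    (h1' : deriv ψ 1 = 0 ∨ iteratedDeriv 2 ψ 1 = 0) (hG : Continuous G)
    (heq : ∀ y ∈ Set.Icc (0 : ℝ) 1, orrSommerfeld R k s U ψ y = I * k * G y)
    (hk : √(R / √2) ≤ |k|) :
    k ^ 6 * l2sq ψ ≤ 4 * R ^ 2 * l2sq G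
      ∧ k ^ 4 * l2sq (deriv ψ) ≤ R ^ 2 * l2sq G
      ∧ k ^ 2 * l2sq (iteratedDeriv 2 ψ) ≤ R ^ 2 * l2sq G := by
  have hRk := sq_le_two_mul_pow_four_of_sqrt_div_sqrt_two_le_abs hR.le hk
  have hsum := weighted_l2sq_le_of_orrSommerfeld_eq hR hRk hs hU hU' hψ h0 h1 h0' h1' hG heq
  have hnonneg {n : ℕ} (hn : Even n) (f : ℝ → ℂ) : 0 ≤ k ^ n * l2sq f :=
    mul_nonneg (hn.pow_nonneg k) (l2sq_nonneg f)
  have hψ₀ := hnonneg (n := 6) (by decide) ψ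
  have hψ₁ := hnonneg (n := 4) (by decide) (deriv ψ)
  have hψ₂ := hnonneg even_two (iteratedDeriv 2 ψ)
  exact ⟨by linarith, by linarith, by linarith⟩

/-- estimates for ψ when |k| > √(R/√2) and I = i·k·G. -/
theorem orr_sommerfeld_estimates_forcing_G
    (R : ℝ) (hR : 0 < R) (k : ℤ) (s : ℂ) (hs : 0 ≤ s.re)
    (ψ : ℝ → ℂ) (hψ : ContDiff ℝ 4 ψ)
    (hb0 : ψ 0 = 0) (hb1 : ψ 1 = 0) (hb0' : deriv ψ 0 = 0) (hb1' : deriv ψ 1 = 0)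
    (G : ℝ → ℂ) (hG : Continuous G)
    (heq : ∀ y ∈ Set.Icc (0:ℝ) 1,
      (1/(R:ℂ)) * iteratedDeriv 4 ψ y
        - (s + 2 * (k:ℂ)^2 / (R:ℂ) + Complex.I * (k:ℂ) * (y:ℂ)) * iteratedDeriv 2 ψ y
        + (s * (k:ℂ)^2 + (k:ℂ)^4 / (R:ℂ) + Complex.I * (k:ℂ)^3 * (y:ℂ)) * ψ y
        = Complex.I * (k:ℂ) * G y)
    (hk : Real.sqrt (R / Real.sqrt 2) < |(k:ℝ)|) :
    (k:ℝ)^6 * l2sq ψ ≤ 4 * R^2 * l2sq G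
      ∧ (k:ℝ)^4 * l2sq (deriv ψ) ≤ 2 * R^2 * l2sq G
      ∧ (k:ℝ)^2 * l2sq (iteratedDeriv 2 ψ) ≤ 2 * R^2 * l2sq G := by
  have heq' : ∀ y ∈ Set.Icc (0 : ℝ) 1, orrSommerfeld R k s id ψ y = I * (k : ℝ) * G y := by
    simpa [orrSommerfeld, iteratedDeriv_id] using heq
  obtain ⟨h₀, h₁, h₂⟩ := orr_sommerfeld_estimates_forcing_G_general hR hs contDiff_id
    (by simp) hψ hb0 hb1 (.inl hb0') (.inl hb1') hG heq' hk.le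
  have hRG : 0 ≤ R ^ 2 * l2sq G := mul_nonneg (sq_nonneg R) (l2sq_nonneg G)
  exact ⟨h₀, by linarith, by linarith⟩

end
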